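/- Let p be a prime, q = p^t, let H be a nondegenerate Hermitian unital in PG(2, q^2) and let U be any unital embedded in PG(2, q^2) (a set of q^3+1 points meeting every line in 1 or q+1 points). Then |H ∩ U| ≡ 1 (mod p^⌈t/2⌉). -/

import Mathlib

/-!
Let `L / K` be the cubic extension of `K = 𝔽_{q²}` and `τ` its involution `x ↦ x ^ q³`. Choose
`θ ∈ L` fixed by `τ` such that `1, θ, θ²` is a `K`-basis, and let `lead` be the coefficient of `θ²`.
Nondegenerate Hermitian forms over a finite field are isometric, so we may take the underlying space
to be `L` and the form to be `lead (τ x * y)`, and the lines are the kernels of `lead (r * ·)` with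
`r` in `Lˣ`. Let `f` be the indicator function of the cone over `U`, and for `u` in `Lˣ` let `S u`
be the sum of `f x` over the zeros of the form translated by `u`, namely
`lead (u * x * τ (u * x)) = 0`.

The key point is that the convolution square of `S` vanishes modulo `q`. Its value at `w` is the sum
of `f x * f y` weighted by the number of `u` for which `x` lies on the translate by `u` and `y` on
that by `w / u`. Modulo `q` this weight is the number of factorisations `c = a * (c / a)` with `a`
fixed by `τ` and `lead a = lead (c / a) = 0`, where `c` is the norm `z * τ z` of `z = w * x * y`.
Here `c` is a real quadratic form in `θ` and the factors are real linear forms; comparing them with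
the solutions of `a * τ a = c`, `lead a = 0` shows that the weight is
`#{ρ | ρ * τ ρ = 1, lead (ρ * z) = 0} - 2`. Modulo `q` the function `f` sums to `0` over every
kernel of `lead (r * ·)` and hence, averaging over `r`, over `L`, so both terms contribute `0`.

Since `p` does not divide `#Lˣ`, the ring `𝔽_p[Lˣ]` is reduced. In `ℤ[Lˣ]` therefore `p ∣ S²`
implies `p ∣ S`, and inductively `p ^ t ∣ S²` implies `p ^ ⌈t / 2⌉ ∣ S`. Evaluating `S` at `1` gives
the theorem.
-/

section GroupAlgebra

theorem dvd_of_pow_dvd_sq {R : Type*} [CommRing R] {r : R} (hr : r ∈ nonZeroDivisors R)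
    (hsq : ∀ a : R, r ∣ a ^ 2 → r ∣ a) (t : ℕ) (a : R) (ha : r ^ t ∣ a ^ 2) :
    r ^ ((t + 1) / 2) ∣ a := by
  induction t using Nat.twoStepInduction generalizing a with
  | zero => simp
  | one => simpa using hsq a (by simpa using ha)
  | more t ih _ =>
    obtain ⟨b, rfl⟩ := hsq a ((dvd_pow_self r (by lia)).trans ha)
    have hb : r ^ t ∣ b ^ 2 := by
      rw [pow_add, mul_pow, mul_comm] at ha
      exact (dvd_cancel_left_mem_nonZeroDivisors (pow_mem hr 2)).mp ha
    rw [show (t + 2 + 1) / 2 = (t + 1) / 2 + 1 by lia, pow_succ']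
    exact mul_dvd_mul_left r (ih b hb)

variable {T : Type*}

theorem natCast_dvd_monoidAlgebra_iff {R : Type*} [Semiring R] [Monoid T] [Finite T] {n : ℕ}
    {a : MonoidAlgebra R T} : (n : MonoidAlgebra R T) ∣ a ↔ ∀ x, (n : R) ∣ a.coeff x := by
  refine ⟨?_, fun h ↦ ?_⟩
  · rintro ⟨b, rfl⟩ x
    rw [← nsmul_eq_mul, MonoidAlgebra.coeff_smul_apply, nsmul_eq_mul]
    exact dvd_mul_right _ _
  · choose b hb using h
    refine ⟨.ofCoeff (Finsupp.equivFunOnFinite.symm b), ?_⟩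
    ext x
    rw [← nsmul_eq_mul, MonoidAlgebra.coeff_smul_apply]
    simp [hb]

variable [CommGroup T] [Fintype T]

-- By Maschke's theorem `𝔽_p[T]` is semisimple, hence reduced.
theorem prime_dvd_of_dvd_sq_monoidAlgebra {p : ℕ} [Fact p.Prime] (hT : ¬ p ∣ Fintype.card T)
    {a : MonoidAlgebra ℤ T} (ha : (p : MonoidAlgebra ℤ T) ∣ a ^ 2) :
    (p : MonoidAlgebra ℤ T) ∣ a := by
  have : NeZero (Nat.card T : ZMod p) := ⟨by
    rwa [Nat.card_eq_fintype_card, Ne, ZMod.natCast_eq_zero_iff]⟩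
  let reduce := MonoidAlgebra.mapRingHom T (Int.castRingHom (ZMod p))
  have hreduce : reduce a = 0 := by
    have hsq : reduce a ^ 2 = 0 := by
      obtain ⟨b, hb⟩ := ha
      have hp : (p : MonoidAlgebra (ZMod p) T) = 0 := by
        rw [MonoidAlgebra.natCast_def]; simp
      rw [← map_pow, hb, map_mul, map_natCast, hp, zero_mul]
    exact pow_eq_zero_iff two_ne_zero |>.mp hsq
  refine natCast_dvd_monoidAlgebra_iff.mpr fun x ↦ ?_
  rw [← ZMod.intCast_zmod_eq_zero_iff_dvd]
  simpa [reduce] using congr(($hreduce).coeff x)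

theorem pow_dvd_of_pow_dvd_convolution_sq {p : ℕ} (hp : p.Prime) (hT : ¬ p ∣ Fintype.card T)
    (t : ℕ) (S : T → ℤ) (hS : ∀ w, (p : ℤ) ^ t ∣ ∑ u, S u * S (w / u)) (w : T) :
    (p : ℤ) ^ ((t + 1) / 2) ∣ S w := by
  have := Fact.mk hp
  let a : MonoidAlgebra ℤ T := .ofCoeff (Finsupp.equivFunOnFinite.symm S)
  have hp0 : (p : MonoidAlgebra ℤ T) ∈ nonZeroDivisors _ := by
    refine mem_nonZeroDivisors_iff_right.mpr fun b hb ↦ ?_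
    ext x
    have hbx : p • b.coeff x = 0 := by
      rw [← MonoidAlgebra.coeff_smul_apply, nsmul_eq_mul, mul_comm, hb]; rfl
    exact (smul_eq_zero.mp hbx).resolve_left hp.ne_zero
  have hsq : ((p ^ t : ℕ) : MonoidAlgebra ℤ T) ∣ a ^ 2 := by
    refine natCast_dvd_monoidAlgebra_iff.mpr fun w ↦ ?_
    rw [sq, MonoidAlgebra.coeff_mul_apply_left, Finsupp.sum_fintype _ _ (by simp)]
    simpa [a, div_eq_mul_inv, mul_comm] using hS w
  rw [Nat.cast_pow] at hsq
  have := dvd_of_pow_dvd_sq hp0 (fun _ ↦ prime_dvd_of_dvd_sq_monoidAlgebra hT) t a hsq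
  rw [← Nat.cast_pow, natCast_dvd_monoidAlgebra_iff] at this
  simpa [a] using this w

end GroupAlgebra

section Conjugation

open Finset Polynomial
open scoped Classical

theorem card_pow_eq_of_isCyclic {G : Type*} [CommGroup G] [IsCyclic G] [Fintype G] {d e : ℕ}
    (hde : Fintype.card G = d * e) {a : G} (ha : a ^ e = 1) : #{x : G | x ^ d = a} = d := by
  have hker {m n : ℕ} (hmn : Fintype.card G = m * n) :
      Nat.card (powMonoidHom m : G →* G).ker = m := by
    rw [IsCyclic.card_powMonoidHom_ker, Nat.card_eq_fintype_card, hmn, Nat.gcd_mul_right_left]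
  have hrange : (powMonoidHom d : G →* G).range = (powMonoidHom e : G →* G).ker := by
    refine Subgroup.eq_of_le_of_card_ge ?_ ?_
    · rintro _ ⟨x, rfl⟩
      simp [MonoidHom.mem_ker, ← pow_mul, ← hde]
    · rw [hker (hde.trans (mul_comm d e)), IsCyclic.card_powMonoidHom_range,
        Nat.card_eq_fintype_card, hde, Nat.gcd_mul_right_left, Nat.mul_div_cancel_left]
      exact Nat.pos_of_mul_pos_right (hde ▸ Fintype.card_pos)
  obtain ⟨x, hx⟩ : a ∈ (powMonoidHom d : G →* G).range := hrange ▸ ha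
  calc #{x : G | x ^ d = a} = #{x : G | x ^ d = 1} :=
        MonoidHom.card_fiber_eq_of_mem_range (powMonoidHom d : G →* G) ⟨x, hx⟩ ⟨1, map_one _⟩
    _ = Nat.card (powMonoidHom d : G →* G).ker := by
        simp [Nat.card_eq_fintype_card, Fintype.card_subtype, MonoidHom.mem_ker]
    _ = d := hker hde

/-- `σ` is the conjugation `x ↦ x ^ q` of a field with `q ^ 2` elements; its fixed elements are
called real. -/
structure IsConjugation {K : Type*} [Field K] (σ : K →+* K) (q : ℕ) : Prop where
  card_eq : Nat.card K = q ^ 2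
  apply_eq_pow : ∀ x, σ x = x ^ q

namespace IsConjugation

variable {K : Type*} [Field K] {σ : K →+* K} {q : ℕ} (hσ : IsConjugation σ q)
include hσ

section

variable [Finite K]

theorem one_lt : 1 < q := by
  have := Finite.one_lt_card (α := K)
  rw [hσ.card_eq] at this
  contrapose! this
  interval_cases q <;> simp

theorem apply_apply (x : K) : σ (σ x) = x := by
  have := Fintype.ofFinite K
  rw [hσ.apply_eq_pow, hσ.apply_eq_pow, ← pow_mul, ← sq, ← hσ.card_eq, Nat.card_eq_fintype_card,
    FiniteField.pow_card]

theorem exists_eq_prime_pow : ∃ p m : ℕ, p.Prime ∧ CharP K p ∧ q = p ^ m := by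
  have := Fintype.ofFinite K
  obtain ⟨p, _⟩ := CharP.exists K
  obtain ⟨n, hp, hn⟩ := FiniteField.card K p
  rw [← Nat.card_eq_fintype_card, hσ.card_eq] at hn
  obtain ⟨m, -, hm⟩ := (Nat.dvd_prime_pow hp).mp (hn ▸ dvd_pow_self q two_ne_zero)
  exact ⟨p, m, hp, ‹_›, hm⟩

end

section

variable [Fintype K]

theorem card_units : Fintype.card Kˣ = (q + 1) * (q - 1) := by
  rw [Fintype.card_units, ← Nat.card_eq_fintype_card, hσ.card_eq, ← Nat.sq_sub_sq, one_pow]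

theorem card_mul_apply_eq {a : Kˣ} (ha : σ a = a) : #{x : Kˣ | (x * σ x : K) = a} = q + 1 := by
  have ha' : a ^ (q - 1) = 1 := by
    refine mul_right_cancel (b := a) ?_
    rw [pow_sub_one_mul (by grind [hσ.one_lt]), one_mul, Units.ext_iff, Units.val_pow_eq_pow_val,
      ← hσ.apply_eq_pow, ha]
  rw [← card_pow_eq_of_isCyclic hσ.card_units ha']
  congr! 2 with x
  rw [Units.ext_iff, hσ.apply_eq_pow, Units.val_pow_eq_pow_val, pow_succ']

-- Hilbert 90, with the number of solutions.
theorem card_apply_mul_eq {κ : Kˣ} (hκ : (κ * σ κ : K) = 1) :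
    #{x : Kˣ | (σ x * κ : K) = x} = q - 1 := by
  have hκ' : κ⁻¹ ^ (q + 1) = 1 := by
    rw [inv_pow, inv_eq_one, Units.ext_iff, Units.val_pow_eq_pow_val, pow_succ',
      ← hσ.apply_eq_pow, hκ, Units.val_one]
  rw [← card_pow_eq_of_isCyclic (hσ.card_units.trans (mul_comm _ _)) hκ']
  congr! 2 with x
  rw [eq_inv_iff_mul_eq_one, ← mul_right_inj x, ← mul_assoc, mul_pow_sub_one
    (by grind [hσ.one_lt]), mul_one, Units.ext_iff, hσ.apply_eq_pow]
  simp

end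

section

variable [Finite K]

theorem exists_mul_apply_eq {a : K} (ha : a ≠ 0) (hσa : σ a = a) : ∃ x : K, x * σ x = a := by
  have := Fintype.ofFinite K
  have hcard : 0 < #{x : Kˣ | (x * σ x : K) = Units.mk0 a ha} :=
    (hσ.card_mul_apply_eq (a := Units.mk0 a ha) hσa) ▸ Nat.succ_pos q
  obtain ⟨x, hx⟩ := card_pos.mp hcard
  exact ⟨x, (mem_filter.mp hx).2⟩

theorem exists_add_apply_ne_zero : ∃ x : K, x + σ x ≠ 0 := by
  have := Fintype.ofFinite K
  by_contra! h
  have hfix (x : Kˣ) : (σ x * (1 : Kˣ) : K) = x := by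
    have h1 : (1 : K) + 1 = 0 := by simpa using h 1
    rw [Units.val_one]
    linear_combination h x - x * h1
  have hcard := hσ.card_apply_mul_eq (κ := 1) (by simp)
  rw [filter_true_of_mem fun x _ ↦ hfix x, card_univ, hσ.card_units] at hcard
  have := hσ.one_lt
  nlinarith [Nat.sub_pos_of_lt this]

theorem exists_sq_add_mul_add_eq_zero {b c : K} (hb : σ b = b) (hc : σ c = c) :
    ∃ x : K, x ^ 2 + b * x + c = 0 := by
  obtain ⟨p, m, hp, _, rfl⟩ := hσ.exists_eq_prime_pow
  have := Fact.mk hp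
  let E := AlgebraicClosure K
  have : CharP E p := charP_of_injective_algebraMap (algebraMap K E).injective p
  let ι := algebraMap K E
  let τ := iterateFrobenius E p m
  have hτ (x : K) : τ (ι x) = ι (σ x) := by simp [τ, iterateFrobenius_def, hσ.apply_eq_pow]
  obtain ⟨x, hx⟩ : ∃ x : E, x ^ 2 + ι b * x + ι c = 0 := by
    have hdeg := degree_quadratic (b := ι b) (c := ι c) one_ne_zero
    obtain ⟨x, hx⟩ := IsAlgClosed.exists_root _ (hdeg.trans_ne (by decide))
    exact ⟨x, by simpa using hx⟩
  have hτx : τ x ^ 2 + ι b * τ x + ι c = 0 := by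
    simpa [hτ, hb, hc] using congr(τ $hx)
  have hττx : τ (τ x) = x := by
    have hroot : (τ x - x) * (τ x - (-ι b - x)) = 0 := by linear_combination hτx - hx
    rcases mul_eq_zero.mp hroot with h | h <;> rw [sub_eq_zero] at h
    · rw [h, h]
    · rw [h, map_sub, map_neg, hτ, hb, h]
      ring
  obtain ⟨y, rfl⟩ : x ∈ ι.range := by
    refine (splits_X_pow_nat_card_sub_X (K := K)).mem_range_of_isRoot
      (FiniteField.X_pow_card_sub_X_ne_zero K Finite.one_lt_card) ?_
    have hx' : x ^ Nat.card K = x := by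
      rw [hσ.card_eq, sq, pow_mul]
      exact hττx
    simp [hx']
  exact ⟨y, ι.injective (by simpa using hx)⟩

end

end IsConjugation

end Conjugation

section HermitianForm

open Module

namespace IsConjugation

variable {K : Type*} [Field K] [Finite K] {σ : K →+* K} {q : ℕ} (hσ : IsConjugation σ q)
variable {V : Type*} [AddCommGroup V] [Module K V] {B : V →ₛₗ[σ] V →ₗ[K] K}

include hσ

theorem exists_apply_self_eq_one [Nontrivial V] (hB : B.IsSymm) (hsep : B.SeparatingLeft) :
    ∃ v, B v v = 1 := by
  obtain ⟨v, hv⟩ : ∃ v, B v v ≠ 0 := by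
    by_contra! hzero
    obtain ⟨x, hx⟩ := exists_ne (0 : V)
    obtain ⟨y, hxy⟩ := not_forall.mp (mt (hsep x) hx)
    obtain ⟨d, hd⟩ := hσ.exists_add_apply_ne_zero
    obtain ⟨z, hz⟩ : ∃ z, B x z = d := ⟨(d / B x y) • y, by simp [hxy]⟩
    refine hd ?_
    calc d + σ d = B (x + z) (x + z) := by simp [hzero, ← hB.eq x z, hz]
      _ = 0 := hzero _
  obtain ⟨c, hc⟩ := hσ.exists_mul_apply_eq (inv_ne_zero hv) (by rw [map_inv₀, hB.eq v v])
  refine ⟨c • v, ?_⟩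
  rw [LinearMap.map_smulₛₗ₂, map_smul, smul_eq_mul, smul_eq_mul, mul_left_comm, ← mul_assoc, hc,
    inv_mul_cancel₀ hv]

theorem exists_orthonormal_basis (n : ℕ) (hV : finrank K V = n) [FiniteDimensional K V]
    (hB : B.IsSymm) (hsep : B.SeparatingLeft) :
    ∃ b : Basis (Fin n) K V, ∀ i j, B (b i) (b j) = if i = j then 1 else 0 := by
  induction n generalizing V with
  | zero => exact ⟨finBasisOfFinrankEq K V hV, fun i ↦ i.elim0⟩
  | succ n ih =>
    have : Nontrivial V := nontrivial_of_finrank_pos (R := K) (by lia)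
    obtain ⟨v, hv⟩ := hσ.exists_apply_self_eq_one hB hsep
    let W := (B v).ker
    have hleft (w : W) : B v w = 0 := w.2
    have hright (w : W) : B w v = 0 := hB.eq_iff.mp (hleft w)
    have hproj (x : V) : x + -B v x • v ∈ W := by simp [W, hv]
    have hW : finrank K W = n := by
      have hne : B v ≠ 0 := fun h ↦ by simp [h] at hv
      rw [← Nat.add_right_cancel_iff (n := 1), ← hV]
      exact Dual.finrank_ker_add_one_of_ne_zero hne
    have hsepW : (B.domRestrict₁₂ W W).SeparatingLeft := fun w hw ↦ by
      refine Subtype.ext (hsep w fun x ↦ ?_)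
      have hwx : B w (x + -B v x • v) = 0 := hw ⟨_, hproj x⟩
      simpa [hright] using hwx
    obtain ⟨b, hb⟩ := ih hW (hB.domRestrict W) hsepW
    refine ⟨.mkFinCons v b (fun c w hw h ↦ ?_) fun x ↦ ⟨_, hproj x⟩, fun i j ↦ ?_⟩
    · simpa [hv, hleft ⟨w, hw⟩] using congr(B v $h)
    · refine Fin.cases ?_ (fun i ↦ ?_) i <;> refine Fin.cases ?_ (fun j ↦ ?_) j
      · simp [hv]
      · simp [hleft (b j), (Fin.succ_ne_zero j).symm]
      · simp [hright (b i)]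
      · simpa [LinearMap.domRestrict₁₂_apply] using hb i j

theorem exists_isometry [FiniteDimensional K V] (hB : B.IsSymm) (hsep : B.SeparatingLeft)
    {V' : Type*} [AddCommGroup V'] [Module K V'] [FiniteDimensional K V']
    {B' : V' →ₛₗ[σ] V' →ₗ[K] K} (hB' : B'.IsSymm) (hsep' : B'.SeparatingLeft)
    (hV : finrank K V = finrank K V') : ∃ e : V ≃ₗ[K] V', ∀ x y, B' (e x) (e y) = B x y := by
  obtain ⟨b, hb⟩ := hσ.exists_orthonormal_basis _ hV hB hsep
  obtain ⟨b', hb'⟩ := hσ.exists_orthonormal_basis _ rfl hB' hsep'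
  refine ⟨b.repr.trans b'.repr.symm, fun x y ↦ ?_⟩
  rw [← LinearMap.sum_repr_mul_repr_mulₛₗ b b, ← LinearMap.sum_repr_mul_repr_mulₛₗ b' b']
  simp [hb, hb']

end IsConjugation

end HermitianForm

section RealCubicBasis

open Finset Module

theorem IsConjugation.apply_algebraMap {K L : Type*} [Field K] [Finite K] [Field L] [Algebra K L]
    {σ : K →+* K} {τ : L →+* L} {q : ℕ} (hσ : IsConjugation σ q) (hτ : IsConjugation τ (q ^ 3))
    (k : K) : τ (algebraMap K L k) = algebraMap K L (σ k) := by
  rw [hτ.apply_eq_pow, ← map_pow, pow_succ, pow_mul, pow_two, pow_mul]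
  simp only [← hσ.apply_eq_pow, hσ.apply_apply]

theorem exists_eq_mul_of_mul_eq_mul {F : Type*} [Field F] {x₀ x₁ r₀ r₁ : F}
    (hr : r₀ ≠ 0 ∨ r₁ ≠ 0) (h : x₀ * r₁ = x₁ * r₀) : ∃ k, x₀ = k * r₀ ∧ x₁ = k * r₁ := by
  rcases hr with hr | hr
  · exact ⟨x₀ / r₀, by field_simp, by field_simp; exact h.symm⟩
  · exact ⟨x₁ / r₁, by field_simp; exact h, by field_simp⟩

/-- A power basis `1, θ, θ²` of a cubic field extension `L / K` whose generator `θ` is fixed by the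
conjugation `τ` of `L`. -/
structure RealCubicBasis (K : Type*) {L : Type*} [Field K] [Field L] [Algebra K L]
    (τ : L →+* L) where
  gen : L
  apply_gen : τ gen = gen
  basis : Basis (Fin 3) K L
  basis_apply : ∀ i, basis i = gen ^ (i : ℕ)

namespace RealCubicBasis

variable {K L : Type*} [Field K] [Field L] [Algebra K L] {τ : L →+* L} (b : RealCubicBasis K τ)

/-- The element `c 0 + c 1 * θ + c 2 * θ²` with coordinates `c`. -/
noncomputable def ofCoords : (Fin 3 → K) ≃ₗ[K] L := b.basis.equivFun.symm

/-- The functional reading off the coefficient of `θ²`. It is the fixed functional from which the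
Hermitian form and the lines of the plane over `L` are built, the latter as kernels of
`lead (r * ·)`. -/
noncomputable def lead : L →ₗ[K] K := .proj 2 ∘ₗ b.ofCoords.symm.toLinearMap

theorem ofCoords_apply (c : Fin 3 → K) : b.ofCoords c =
    algebraMap K L (c 0) + algebraMap K L (c 1) * b.gen + algebraMap K L (c 2) * b.gen ^ 2 := by
  simp [ofCoords, b.basis.equivFun_symm_apply, Fin.sum_univ_three, b.basis_apply, Algebra.smul_def]

theorem lead_ofCoords (c : Fin 3 → K) : b.lead (b.ofCoords c) = c 2 := by
  simp [lead]

theorem lead_add_mul (c d : K) : b.lead (algebraMap K L c + algebraMap K L d * b.gen) = 0 := by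
  simpa [ofCoords_apply] using b.lead_ofCoords ![c, d, 0]

theorem eq_add_mul_of_lead_eq_zero {x : L} (hx : b.lead x = 0) :
    ∃ c d : K, x = algebraMap K L c + algebraMap K L d * b.gen := by
  obtain ⟨c, rfl⟩ := b.ofCoords.surjective x
  rw [lead_ofCoords] at hx
  exact ⟨c 0, c 1, by simp [ofCoords_apply, hx]⟩

theorem exists_lead_mul_ne_zero {x : L} (hx : x ≠ 0) : ∃ y, b.lead (x * y) ≠ 0 :=
  ⟨x⁻¹ * b.ofCoords ![0, 0, 1], by simp [mul_inv_cancel_left₀ hx, lead_ofCoords]⟩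

-- Elements with `lead = 0` are linear forms in `θ`, and a product of two of them, a quadratic form,
-- determines its factors up to scalars.
theorem div_mem_or_div_mem_of_mul_eq_mul {r s x y : L} (hr : b.lead r = 0) (hs : b.lead s = 0)
    (hx : b.lead x = 0) (hy : b.lead y = 0) (hr0 : r ≠ 0) (hs0 : s ≠ 0) (h : r * s = x * y) :
    x / r ∈ (algebraMap K L).fieldRange ∨ x / s ∈ (algebraMap K L).fieldRange := by
  have hprop {x₀ x₁ r₀ r₁ : K}
      (hr0 : algebraMap K L r₀ + algebraMap K L r₁ * b.gen ≠ 0) (hdet : x₀ * r₁ - x₁ * r₀ = 0) :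
      (algebraMap K L x₀ + algebraMap K L x₁ * b.gen) /
        (algebraMap K L r₀ + algebraMap K L r₁ * b.gen) ∈ (algebraMap K L).fieldRange := by
    have hr : r₀ ≠ 0 ∨ r₁ ≠ 0 := by
      contrapose! hr0
      simp [hr0]
    obtain ⟨k, rfl, rfl⟩ := exists_eq_mul_of_mul_eq_mul hr (sub_eq_zero.mp hdet)
    exact ⟨k, by rw [eq_div_iff hr0, map_mul, map_mul]; ring⟩
  obtain ⟨r₀, r₁, rfl⟩ := b.eq_add_mul_of_lead_eq_zero hr
  obtain ⟨s₀, s₁, rfl⟩ := b.eq_add_mul_of_lead_eq_zero hs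
  obtain ⟨x₀, x₁, rfl⟩ := b.eq_add_mul_of_lead_eq_zero hx
  obtain ⟨y₀, y₁, rfl⟩ := b.eq_add_mul_of_lead_eq_zero hy
  have hcoeff : ![r₀ * s₀, r₀ * s₁ + r₁ * s₀, r₁ * s₁] =
      ![x₀ * y₀, x₀ * y₁ + x₁ * y₀, x₁ * y₁] := by
    refine b.ofCoords.injective ?_
    simp only [ofCoords_apply, Matrix.cons_val, map_add, map_mul]
    linear_combination h
  have hdet : (x₀ * r₁ - x₁ * r₀) * (x₀ * s₁ - x₁ * s₀) = 0 := by
    have h₀ : r₀ * s₀ = x₀ * y₀ := congrFun hcoeff 0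
    have h₁ : r₀ * s₁ + r₁ * s₀ = x₀ * y₁ + x₁ * y₀ := congrFun hcoeff 1
    have h₂ : r₁ * s₁ = x₁ * y₁ := congrFun hcoeff 2
    linear_combination x₁ ^ 2 * h₀ - x₀ * x₁ * h₁ + x₀ ^ 2 * h₂
  exact (mul_eq_zero.mp hdet).imp (hprop hr0) (hprop hs0)

variable [Finite K] {σ : K →+* K} {q : ℕ} (hσ : IsConjugation σ q) (hτ : IsConjugation τ (q ^ 3))
include hσ hτ

theorem apply_ofCoords (c : Fin 3 → K) :
    τ (b.ofCoords c) = b.ofCoords (σ ∘ c) := by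
  simp [ofCoords_apply, hσ.apply_algebraMap hτ, b.apply_gen]

theorem lead_apply (x : L) : b.lead (τ x) = σ (b.lead x) := by
  obtain ⟨c, rfl⟩ := b.ofCoords.surjective x
  simp only [b.apply_ofCoords hσ hτ, lead_ofCoords, Function.comp_apply]

theorem apply_eq_self_iff (c : Fin 3 → K) :
    τ (b.ofCoords c) = b.ofCoords c ↔ ∀ i, σ (c i) = c i := by
  rw [b.apply_ofCoords hσ hτ, b.ofCoords.injective.eq_iff, funext_iff]
  rfl

theorem exists_mul_eq_of_apply_eq {c : L} (hc : τ c = c) :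
    ∃ r s : L, b.lead r = 0 ∧ b.lead s = 0 ∧ r * s = c := by
  obtain ⟨c, rfl⟩ := b.ofCoords.surjective c
  rw [b.apply_eq_self_iff hσ hτ] at hc
  rw [ofCoords_apply]
  by_cases hc2 : c 2 = 0
  · exact ⟨_, algebraMap K L 1 + algebraMap K L 0 * b.gen, b.lead_add_mul (c 0) (c 1),
      b.lead_add_mul 1 0, by simp [hc2]⟩
  · obtain ⟨x, hx⟩ := hσ.exists_sq_add_mul_add_eq_zero (b := c 1 / c 2) (c := c 0 / c 2)
      (by simp [hc]) (by simp [hc])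
    have hc0 : c 0 = c 2 * (-x) * (c 1 / c 2 + x) := by
      field_simp at hx ⊢
      linear_combination hx
    refine ⟨_, _, b.lead_add_mul (c 2 * (-x)) (c 2), b.lead_add_mul (c 1 / c 2 + x) 1, ?_⟩
    rw [hc0]
    simp only [map_mul, map_add, map_neg, map_one]
    have : algebraMap K L (c 2) * algebraMap K L (c 1 / c 2) = algebraMap K L (c 1) := by
      rw [← map_mul, mul_div_cancel₀ _ hc2]
    linear_combination b.gen * this

end RealCubicBasis

end RealCubicBasis

section Cosets

open Finset
open scoped Classical

variable {K L : Type*} [Field K] [Field L] [Fintype L] [Algebra K L]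

theorem card_filter_div_mem_fieldRange [Fintype K] (s : Lˣ) (P : L → Prop) :
    #{a : Lˣ | (a / s : L) ∈ (algebraMap K L).fieldRange ∧ P a} =
      #{k : Kˣ | P (algebraMap K L k * s)} := by
  symm
  refine card_bij (fun k _ ↦ Units.map (algebraMap K L) k * s) ?_ ?_ ?_
  · intro k hk
    exact mem_filter.mpr ⟨mem_univ _, ⟨k, by simp⟩, by simpa using hk⟩
  · intro k _ k' _ h
    exact Units.map_injective (algebraMap K L).injective (mul_right_cancel h)
  · intro a ha
    obtain ⟨⟨k, hk⟩, hP⟩ := (mem_filter.mp ha).2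
    have hk0 : k ≠ 0 := by
      rintro rfl
      simp [eq_comm] at hk
    have has : algebraMap K L k * s = a := by rw [hk, div_mul_cancel₀ _ s.ne_zero]
    exact ⟨.mk0 k hk0, by simpa [has] using hP, Units.ext (by simpa using has)⟩

variable [Finite K] {σ : K →+* K} {τ : L →+* L} {q : ℕ} (hσ : IsConjugation σ q)
  (hτ : IsConjugation τ (q ^ 3))
include hσ hτ

theorem card_div_mem_fieldRange_and_apply_eq (s : Lˣ) :
    #{a : Lˣ | (a / s : L) ∈ (algebraMap K L).fieldRange ∧ τ a = a} =
      if (τ s / s : L) ∈ (algebraMap K L).fieldRange then q - 1 else 0 := by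
  have := Fintype.ofFinite K
  rw [card_filter_div_mem_fieldRange s fun a ↦ τ a = a]
  simp only [map_mul, hσ.apply_algebraMap hτ]
  have hs := s.ne_zero
  have hτs : τ s ≠ 0 := (map_ne_zero τ).mpr hs
  split_ifs with h
  · obtain ⟨κ, hκ⟩ := h
    have hκ0 : κ ≠ 0 := by
      rintro rfl
      rw [map_zero] at hκ
      exact (div_ne_zero hτs hs) hκ.symm
    have hnorm : κ * σ κ = 1 := by
      refine (algebraMap K L).injective ?_
      rw [map_mul, map_one, ← hσ.apply_algebraMap hτ, hκ, map_div₀, hτ.apply_apply]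
      field_simp
    rw [← hσ.card_apply_mul_eq (κ := .mk0 κ hκ0) hnorm]
    congr! 2 with k
    rw [← (algebraMap K L).injective.eq_iff, Units.val_mk0, map_mul, hκ]
    field_simp
  · refine card_eq_zero.mpr (filter_eq_empty_iff.mpr fun k _ hk ↦ h ⟨k / σ k, ?_⟩)
    have hσk : algebraMap K L (σ k) ≠ 0 := by simp
    rw [map_div₀, div_eq_div_iff hσk hs, ← hk, mul_comm]

theorem card_div_mem_fieldRange_and_mul_apply_eq {c : Lˣ} (hc : τ c = c) (s : Lˣ) :
    #{a : Lˣ | (a / s : L) ∈ (algebraMap K L).fieldRange ∧ (a * τ a : L) = c} =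
      if (s * τ s / c : L) ∈ (algebraMap K L).fieldRange then q + 1 else 0 := by
  have := Fintype.ofFinite K
  rw [card_filter_div_mem_fieldRange s fun a ↦ a * τ a = c]
  simp only [map_mul, hσ.apply_algebraMap hτ]
  have hs := s.ne_zero
  have hc0 := c.ne_zero
  have hτs : τ s ≠ 0 := (map_ne_zero τ).mpr hs
  split_ifs with h
  · obtain ⟨κ, hκ⟩ := h
    have hκ0 : κ ≠ 0 := by
      rintro rfl
      rw [map_zero] at hκ
      exact (div_ne_zero (mul_ne_zero hs hτs) hc0) hκ.symm
    have hσκ : σ κ = κ := by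
      refine (algebraMap K L).injective ?_
      rw [← hσ.apply_algebraMap hτ, hκ, map_div₀, map_mul, hτ.apply_apply, hc, mul_comm]
    rw [← hσ.card_mul_apply_eq (a := (.mk0 κ hκ0)⁻¹) (by simp [hσκ])]
    congr! 2 with k
    rw [← (algebraMap K L).injective.eq_iff, Units.val_inv_eq_inv_val, Units.val_mk0, map_mul,
      map_inv₀, hκ, inv_div, eq_div_iff (mul_ne_zero hs hτs)]
    ring_nf
  · refine card_eq_zero.mpr (filter_eq_empty_iff.mpr fun k _ hk ↦ h ⟨(k * σ k)⁻¹, ?_⟩)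
    rw [map_inv₀, map_mul, ← hk]
    have hσk : algebraMap K L (σ k) ≠ 0 := by simp
    have hk : algebraMap K L k ≠ 0 := by simp
    field_simp

end Cosets

section RealFactors

open Finset
open scoped Classical

theorem IsConjugation.natCast_sub_one {K R : Type*} [Field K] [Finite K] [Ring R] {σ : K →+* K}
    {q : ℕ} (hσ : IsConjugation σ q) (hq : (q : R) = 0) : ((q - 1 : ℕ) : R) = -1 := by
  rw [Nat.cast_sub hσ.one_lt.le, hq, Nat.cast_one, zero_sub]

namespace RealCubicBasis

variable {K L : Type*} [Field K] [Field L] [Algebra K L] {τ : L →+* L} (b : RealCubicBasis K τ)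

theorem lead_eq_zero_of_div_mem {x r : L} (hr : b.lead r = 0) (hr0 : r ≠ 0)
    (h : x / r ∈ (algebraMap K L).fieldRange) : b.lead x = 0 := by
  obtain ⟨k, hk⟩ := h
  rw [← div_mul_cancel₀ x hr0, ← hk, ← Algebra.smul_def, map_smul, hr, smul_zero]

theorem lead_eq_zero_and_lead_div_eq_zero_iff {r s c : L} (hr : b.lead r = 0) (hs : b.lead s = 0)
    (hc : r * s = c) (hc0 : c ≠ 0) {x : L} (hx : x ≠ 0) :
    b.lead x = 0 ∧ b.lead (c / x) = 0 ↔
      x / r ∈ (algebraMap K L).fieldRange ∨ x / s ∈ (algebraMap K L).fieldRange := by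
  subst hc
  obtain ⟨hr0, hs0⟩ := mul_ne_zero_iff.mp hc0
  refine ⟨fun h ↦ b.div_mem_or_div_mem_of_mul_eq_mul hr hs h.1 h.2 hr0 hs0
    (mul_div_cancel₀ _ hx).symm, ?_⟩
  rintro (h | h)
  · refine ⟨b.lead_eq_zero_of_div_mem hr hr0 h, b.lead_eq_zero_of_div_mem hs hs0 ?_⟩
    convert inv_mem h using 1
    field_simp
  · refine ⟨b.lead_eq_zero_of_div_mem hs hs0 h, b.lead_eq_zero_of_div_mem hr hr0 ?_⟩
    convert inv_mem h using 1
    field_simp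

variable [Finite K] [Fintype L] {σ : K →+* K} {q : ℕ} (hσ : IsConjugation σ q)
  (hτ : IsConjugation τ (q ^ 3)) {R : Type*} [CommRing R] (hq : (q : R) = 0)
include hσ hτ

include hq in
theorem card_real_in_coset_eq {c : Lˣ} (hc : τ c = c) {r s : Lˣ} (hr : b.lead r = 0)
    (hs : b.lead s = 0) (hrs : (r * s : L) = c) :
    (#{a : Lˣ | (a / r : L) ∈ (algebraMap K L).fieldRange ∧ τ a = a} : R) =
      #{a : Lˣ | (a / r : L) ∈ (algebraMap K L).fieldRange ∧ (a * τ a : L) = c} -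
        if (r / s : L) ∈ (algebraMap K L).fieldRange then 2 else 1 := by
  have hτr : τ r ≠ 0 := by simp
  have hnorm : (r * τ r / c : L) = τ r / s := by
    rw [← hrs, mul_div_mul_left _ _ r.ne_zero]
  have hconj : (τ r / r : L) ∈ (algebraMap K L).fieldRange ∨
      (τ r / s : L) ∈ (algebraMap K L).fieldRange :=
    b.div_mem_or_div_mem_of_mul_eq_mul hr hs (by rw [b.lead_apply hσ hτ, hr, map_zero])
      (by rw [b.lead_apply hσ hτ, hs, map_zero]) r.ne_zero s.ne_zero
      (by rw [← map_mul, hrs, hc])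
  have hratio : (τ r / s : L) / (τ r / r) = r / s := by
    field_simp
  have hratio' : (τ r / r : L) * (r / s) = τ r / s := by
    field_simp
  rw [card_div_mem_fieldRange_and_apply_eq hσ hτ, card_div_mem_fieldRange_and_mul_apply_eq hσ hτ hc,
    hnorm]
  by_cases hr : (τ r / r : L) ∈ (algebraMap K L).fieldRange <;>
    by_cases hs : (τ r / s : L) ∈ (algebraMap K L).fieldRange
  · have : (r / s : L) ∈ (algebraMap K L).fieldRange := hratio ▸ div_mem hs hr
    simp only [hr, hs, this, if_true, hσ.natCast_sub_one hq, Nat.cast_succ, hq]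
    norm_num
  · have : (r / s : L) ∉ (algebraMap K L).fieldRange := fun h ↦ hs (hratio' ▸ mul_mem hr h)
    simp [hr, hs, this, hσ.natCast_sub_one hq]
  · have : (r / s : L) ∉ (algebraMap K L).fieldRange := by
      refine fun h ↦ hr ?_
      rw [← hratio] at h
      simpa [hτr] using div_mem hs h
    simp [hr, hs, this, hq]
  · exact (hconj.elim hr hs).elim

include hq in
theorem card_real_factors_eq {c : Lˣ} (hc : τ c = c) :
    (#{a : Lˣ | τ a = a ∧ b.lead a = 0 ∧ b.lead (c / a) = 0} : R) =
      #{a : Lˣ | (a * τ a : L) = c ∧ b.lead a = 0} - 2 := by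
  obtain ⟨r, s, hr, hs, hrs⟩ := b.exists_mul_eq_of_apply_eq hσ hτ hc
  obtain ⟨hr0, hs0⟩ := mul_ne_zero_iff.mp (hrs ▸ c.ne_zero)
  lift r to Lˣ using hr0.isUnit
  lift s to Lˣ using hs0.isUnit
  have hfactor (a : Lˣ) := b.lead_eq_zero_and_lead_div_eq_zero_iff hr hs hrs c.ne_zero a.ne_zero
  have hnorm (a : Lˣ) : (a * τ a : L) = c ∧ b.lead a = 0 ↔
      (b.lead a = 0 ∧ b.lead (c / a) = 0) ∧ (a * τ a : L) = c := by
    refine and_comm.trans (and_congr_left fun h ↦ (and_iff_left_of_imp fun ha ↦ ?_).symm)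
    rw [← h, mul_div_cancel_left₀ _ a.ne_zero, b.lead_apply hσ hτ, ha, map_zero]
  simp only [and_comm (a := τ _ = _), hnorm, hfactor]
  have hr' := b.card_real_in_coset_eq hσ hτ hq hc hr hs hrs
  have hs' := b.card_real_in_coset_eq hσ hτ hq hc hs hr (mul_comm (r : L) s ▸ hrs)
  by_cases hmem : (r / s : L) ∈ (algebraMap K L).fieldRange
  · have hcoset (a : Lˣ) : (a / s : L) ∈ (algebraMap K L).fieldRange ↔
        (a / r : L) ∈ (algebraMap K L).fieldRange := by
      constructor <;> intro h
      · convert div_mem h hmem using 1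
        field_simp
      · convert mul_mem h hmem using 1
        field_simp
    rw [if_pos hmem] at hr'
    simpa only [hcoset, or_self] using hr'
  · have hmem' : (s / r : L) ∉ (algebraMap K L).fieldRange := by
      rwa [← inv_div, inv_mem_iff]
    have hcard (P : Lˣ → Prop) : #{a : Lˣ | ((a / r : L) ∈ (algebraMap K L).fieldRange ∨
        (a / s : L) ∈ (algebraMap K L).fieldRange) ∧ P a} =
        #{a : Lˣ | (a / r : L) ∈ (algebraMap K L).fieldRange ∧ P a} +
          #{a : Lˣ | (a / s : L) ∈ (algebraMap K L).fieldRange ∧ P a} := by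
      simp only [or_and_right, filter_or]
      refine card_union_of_disjoint (disjoint_filter.mpr fun a _ har has ↦ hmem ?_)
      convert div_mem has.1 har.1 using 1
      field_simp
    rw [hcard, hcard, Nat.cast_add, Nat.cast_add, hr', hs', if_neg hmem, if_neg hmem']
    ring

end RealCubicBasis

end RealFactors

section Counting

open Finset
open scoped Classical

theorem card_filter_eq_card_units_add_one {K : Type*} [Field K] [Fintype K] {P : K → Prop}
    [DecidablePred P] (h0 : P 0) : #{x : K | P x} = #{x : Kˣ | P x} + 1 := by
  have himage : ({x : K | P x} : Finset K).erase 0 = ({x : Kˣ | P x} : Finset Kˣ).image (↑) := by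
    ext x
    simp only [mem_erase, mem_filter, mem_univ, true_and, mem_image]
    exact ⟨fun h ↦ ⟨.mk0 x h.1, h.2, rfl⟩, by rintro ⟨u, hu, rfl⟩; exact ⟨u.ne_zero, hu⟩⟩
  rw [← card_erase_add_one (mem_filter.mpr ⟨mem_univ _, h0⟩), himage,
    card_image_of_injective _ Units.val_injective]

namespace IsConjugation

variable {K : Type*} [Field K] [Fintype K] {σ : K →+* K} {q : ℕ} (hσ : IsConjugation σ q)
include hσ

theorem card_apply_eq_self_units : #{x : Kˣ | σ x = x} = q - 1 := by
  simpa using hσ.card_apply_mul_eq (κ := 1) (by simp)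

theorem card_apply_eq_self : #{x : K | σ x = x} = q := by
  rw [card_filter_eq_card_units_add_one (P := fun x ↦ σ x = x) (map_zero σ),
    hσ.card_apply_eq_self_units, Nat.sub_add_cancel hσ.one_lt.le]

theorem card_norm (P : K → Prop) [DecidablePred P] :
    #{v : Kˣ | P (v * σ v)} = #{a : Kˣ | σ a = a ∧ P a} * (q + 1) := by
  have hreal (v : Kˣ) : σ (v * σ v) = v * σ v := by
    rw [map_mul, hσ.apply_apply, mul_comm]
  have hmaps : Set.MapsTo (fun v : Kˣ ↦ v * Units.map σ v) ({v | P (v * σ v)} : Finset Kˣ)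
      ({a | σ a = a ∧ P a} : Finset Kˣ) := fun v hv ↦ by simpa [hreal] using hv
  rw [card_eq_sum_card_fiberwise hmaps, sum_const_nat fun a ha ↦ ?_]
  obtain ⟨ha, hP⟩ := (mem_filter.mp ha).2
  rw [← hσ.card_mul_apply_eq ha, filter_filter]
  congr! 2 with v
  simp only [Units.ext_iff, Units.val_mul, Units.coe_map, MonoidHom.coe_coe, and_iff_right_iff_imp]
  exact fun h ↦ h ▸ hP

variable {R : Type*} [CommRing R] (hq : (q : R) = 0)
include hq

theorem cast_card_units : (Fintype.card Kˣ : R) = -1 := by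
  rw [hσ.card_units, Nat.cast_mul, hσ.natCast_sub_one hq]
  simp [hq]

theorem cast_card_norm (P : K → Prop) [DecidablePred P] :
    (#{v : Kˣ | P (v * σ v)} : R) = #{a : Kˣ | σ a = a ∧ P a} := by
  rw [hσ.card_norm]
  simp [hq]

theorem cast_card_norm_eq_one : (#{ρ : Kˣ | (ρ * σ ρ : K) = 1} : R) = 1 := by
  have := hσ.card_mul_apply_eq (a := 1) (by simp)
  rw [Units.val_one] at this
  simp [this, hq]

end IsConjugation

namespace RealCubicBasis

variable {K L : Type*} [Field K] [Field L] [Fintype L] [Algebra K L] {τ : L →+* L}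
  (b : RealCubicBasis K τ)

theorem card_filter_eq_prod {P : L → Prop} [DecidablePred P] (S : Fin 3 → Finset K)
    (hP : ∀ c, P (b.ofCoords c) ↔ ∀ i, c i ∈ S i) : #{x : L | P x} = ∏ i, #(S i) := by
  rw [← Fintype.card_piFinset]
  exact (card_equiv b.ofCoords.toEquiv fun c ↦ by simp [hP]).symm

theorem card_lead_eq_zero_units [Fintype K] :
    #{x : Lˣ | b.lead x = 0} = Fintype.card K ^ 2 - 1 := by
  rw [eq_tsub_iff_add_eq_of_le (Nat.one_le_pow _ _ Fintype.card_pos),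
    ← card_filter_eq_card_units_add_one (P := fun x ↦ b.lead x = 0) (map_zero _),
    b.card_filter_eq_prod ![univ, univ, {0}]]
  · simp [Fin.prod_univ_three, sq]
  · simp [lead_ofCoords, Fin.forall_fin_succ]

variable [Finite K] {σ : K →+* K} {q : ℕ} (hσ : IsConjugation σ q) (hτ : IsConjugation τ (q ^ 3))
include hσ hτ

theorem card_real_lead_eq_zero_units : #{x : Lˣ | τ x = x ∧ b.lead x = 0} = q ^ 2 - 1 := by
  have := Fintype.ofFinite K
  rw [eq_tsub_iff_add_eq_of_le (Nat.one_le_pow _ _ (zero_lt_one.trans hσ.one_lt)),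
    ← card_filter_eq_card_units_add_one (P := fun x ↦ τ x = x ∧ b.lead x = 0) (by simp),
    b.card_filter_eq_prod
      ![({k | σ k = k} : Finset K), ({k | σ k = k} : Finset K), {0}] fun c ↦ ?_]
  · simp [Fin.prod_univ_three, hσ.card_apply_eq_self, sq]
  · rw [b.apply_eq_self_iff hσ hτ, lead_ofCoords]
    simp +contextual [Fin.forall_fin_succ, and_assoc]

end RealCubicBasis

end Counting

section Convolution

open Finset
open scoped Classical

theorem sum_mul_card_filter {ι κ R : Type*} [Fintype ι] [Fintype κ] [CommSemiring R] (f : ι → R)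
    (P : κ → ι → Prop) [∀ k i, Decidable (P k i)] :
    ∑ i, f i * #{k | P k i} = ∑ k, ∑ i with P k i, f i := by
  simp only [card_filter, Nat.cast_sum, mul_sum, sum_filter]
  rw [sum_comm]
  simp

namespace RealCubicBasis

variable {K L : Type*} [Field K] [Finite K] [Field L] [Fintype L] [Algebra K L] {τ : L →+* L}
  (b : RealCubicBasis K τ) {σ : K →+* K} {q : ℕ} (hσ : IsConjugation σ q)
  (hτ : IsConjugation τ (q ^ 3)) {R : Type*} [CommRing R] (hq : (q : R) = 0)
include hσ hτ hq

theorem cast_card_lead_norm : (#{v : Lˣ | b.lead (v * τ v) = 0} : R) = -1 := by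
  have hQ : ((q ^ 3 : ℕ) : R) = 0 := by simp [hq]
  rw [hτ.cast_card_norm hQ (fun a ↦ b.lead a = 0), b.card_real_lead_eq_zero_units hσ hτ,
    Nat.cast_pred (pow_pos (zero_lt_one.trans hσ.one_lt) 2)]
  simp [hq]

theorem cast_card_lead_norm_and_lead_div_norm (z : Lˣ) :
    (#{v : Lˣ | b.lead (v * τ v) = 0 ∧ b.lead (z * τ z / (v * τ v)) = 0} : R) =
      #{ρ : Lˣ | (ρ * τ ρ : L) = 1 ∧ b.lead (ρ * z) = 0} - 2 := by
  have hQ : ((q ^ 3 : ℕ) : R) = 0 := by simp [hq]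
  obtain ⟨c, hcz⟩ : ∃ c : Lˣ, (c : L) = z * τ z := ⟨z * Units.map τ z, by simp⟩
  have hc : τ c = c := by
    rw [hcz, map_mul, hτ.apply_apply, mul_comm]
  have hscale : #{ρ : Lˣ | (ρ * τ ρ : L) = 1 ∧ b.lead (ρ * z) = 0} =
      #{s : Lˣ | (s * τ s : L) = c ∧ b.lead s = 0} := by
    refine card_equiv (Equiv.mulRight z) fun ρ ↦ ?_
    rw [mem_filter_univ, mem_filter_univ, Equiv.coe_mulRight, Units.val_mul, map_mul τ,
      mul_mul_mul_comm, ← hcz, mul_eq_right₀ c.ne_zero]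
  rw [hscale, ← b.card_real_factors_eq hσ hτ hq hc, ← hcz]
  exact hτ.cast_card_norm hQ fun a ↦ b.lead a = 0 ∧ b.lead (c / a) = 0

theorem cast_card_lead_norm_mul_and_lead_norm_div_mul (w : Lˣ) (x y : L) :
    (#{u : Lˣ | b.lead (u * x * τ (u * x)) = 0 ∧ b.lead (w / u * y * τ (w / u * y)) = 0} : R) =
      #{ρ : Lˣ | (ρ * τ ρ : L) = 1 ∧ b.lead (ρ * w * x * y) = 0} - 2 := by
  have hQ : ((q ^ 3 : ℕ) : R) = 0 := by simp [hq]
  have hdegenerate (h : x * y = 0) :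
      (#{ρ : Lˣ | (ρ * τ ρ : L) = 1 ∧ b.lead (ρ * w * x * y) = 0} : R) = 1 := by
    simp [mul_assoc, h, hτ.cast_card_norm_eq_one hQ]
  rcases eq_or_ne x 0 with rfl | hx <;> rcases eq_or_ne y 0 with rfl | hy
  · rw [hdegenerate (zero_mul _)]
    simp only [mul_zero, map_zero, and_self, filter_true, card_univ, hτ.cast_card_units hQ]
    norm_num
  · rw [hdegenerate (zero_mul _)]
    lift y to Lˣ using hy.isUnit
    simp only [mul_zero, map_zero, true_and]
    have : #{u : Lˣ | b.lead (w / u * y * τ (w / u * y)) = 0} = #{v : Lˣ | b.lead (v * τ v) = 0} :=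
      card_equiv (Equiv.divLeft (w * y)) fun u ↦ by
        simp only [mem_filter_univ, Equiv.divLeft_apply, Units.val_div_eq_div_val, Units.val_mul,
          mul_div_right_comm]
    rw [this, b.cast_card_lead_norm hσ hτ hq]
    norm_num
  · rw [hdegenerate (mul_zero _)]
    lift x to Lˣ using hx.isUnit
    simp only [mul_zero, map_zero, and_true]
    have : #{u : Lˣ | b.lead (u * x * τ (u * x)) = 0} = #{v : Lˣ | b.lead (v * τ v) = 0} :=
      card_equiv (Equiv.mulRight x) fun u ↦ by simp
    rw [this, b.cast_card_lead_norm hσ hτ hq]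
    norm_num
  · lift y to Lˣ using hy.isUnit
    lift x to Lˣ using hx.isUnit
    have := b.cast_card_lead_norm_and_lead_div_norm hσ hτ hq (w * x * y)
    simp only [Units.val_mul, ← mul_assoc] at this
    rw [← this]
    congr 1
    refine card_equiv (Equiv.mulRight x) fun u ↦ ?_
    have hτx : τ x ≠ 0 := by simp
    have hτu : τ u ≠ 0 := by simp
    simp only [mem_filter_univ, Equiv.coe_mulRight, Units.val_mul, map_mul, map_div₀]
    congr! 3
    field_simp

theorem cast_card_lead_mul (y : L) : (#{r : Lˣ | b.lead (r * y) = 0} : R) = -1 := by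
  have := Fintype.ofFinite K
  rcases eq_or_ne y 0 with rfl | hy
  · have hQ : ((q ^ 3 : ℕ) : R) = 0 := by simp [hq]
    simpa using hτ.cast_card_units hQ
  · lift y to Lˣ using hy.isUnit
    have : #{r : Lˣ | b.lead (r * y) = 0} = #{x : Lˣ | b.lead x = 0} :=
      card_equiv (Equiv.mulRight y) fun u ↦ by simp
    rw [this, b.card_lead_eq_zero_units, Nat.cast_pred (pow_pos Fintype.card_pos 2),
      ← Nat.card_eq_fintype_card, hσ.card_eq]
    simp [hq]

section

variable {f : L → R} (hf : ∀ r : Lˣ, ∑ x with b.lead (r * x) = 0, f x = 0)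
include hf

theorem sum_eq_zero_of_sum_lead_eq_zero : ∑ x, f x = 0 := by
  have := sum_mul_card_filter f fun (r : Lˣ) x ↦ b.lead (r * x) = 0
  simpa only [hf, b.cast_card_lead_mul hσ hτ hq, mul_neg_one, sum_neg_distrib, sum_const_zero,
    neg_eq_zero] using this

theorem sum_lead_mul_eq_zero (r : L) : ∑ x with b.lead (r * x) = 0, f x = 0 := by
  rcases eq_or_ne r 0 with rfl | hr
  · simpa using b.sum_eq_zero_of_sum_lead_eq_zero hσ hτ hq hf
  · exact hf (.mk0 r hr)

theorem sum_mul_card_norm_eq_one_and_lead_mul (z : L) :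
    ∑ y, f y * #{ρ : Lˣ | (ρ * τ ρ : L) = 1 ∧ b.lead (ρ * z * y) = 0} = 0 := by
  rw [sum_mul_card_filter f fun (ρ : Lˣ) y ↦ (ρ * τ ρ : L) = 1 ∧ b.lead (ρ * z * y) = 0]
  refine sum_eq_zero fun ρ _ ↦ ?_
  by_cases hρ : (ρ * τ ρ : L) = 1
  · simpa only [hρ, true_and] using b.sum_lead_mul_eq_zero hσ hτ hq hf _
  · simp [hρ]

theorem sum_mul_sum_eq_zero (w : Lˣ) :
    ∑ u : Lˣ, (∑ x with b.lead (u * x * τ (u * x)) = 0, f x) *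
      ∑ y with b.lead (w / u * y * τ (w / u * y)) = 0, f y = 0 := by
  calc _ = ∑ v : L × L, f v.1 * f v.2 * (#{u : Lˣ | b.lead (u * v.1 * τ (u * v.1)) = 0 ∧
          b.lead (w / u * v.2 * τ (w / u * v.2)) = 0} : R) := by
        rw [sum_mul_card_filter]
        simp only [sum_mul_sum, ← sum_product', ← filter_product, univ_product_univ]
    _ = ∑ x, f x * (∑ y, f y *
          (#{ρ : Lˣ | (ρ * τ ρ : L) = 1 ∧ b.lead (ρ * (w * x) * y) = 0} : R) - (∑ y, f y) * 2) := by
        simp only [b.cast_card_lead_norm_mul_and_lead_norm_div_mul hσ hτ hq]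
        simp only [Fintype.sum_prod_type, mul_assoc, mul_sub, sum_sub_distrib, mul_sum, sum_mul]
    _ = 0 := by
        simp only [b.sum_mul_card_norm_eq_one_and_lead_mul hσ hτ hq hf,
          b.sum_eq_zero_of_sum_lead_eq_zero hσ hτ hq hf, zero_mul, sub_zero, mul_zero,
          sum_const_zero]

end

end RealCubicBasis

end Convolution

section CubicExtension

open Finset Module

variable {K : Type*} [Field K] [Finite K] {σ : K →+* K} {q : ℕ} (hσ : IsConjugation σ q)
include hσ

theorem IsConjugation.exists_cubic_extension : ∃ (L : Type) (_ : Field L) (_ : Fintype L)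
    (_ : Algebra K L) (τ : L →+* L), IsConjugation τ (q ^ 3) := by
  obtain ⟨p, m, hp, _, rfl⟩ := hσ.exists_eq_prime_pow
  have := Fact.mk hp
  let L := FiniteField.Extension K p 3
  have : CharP L p := charP_of_injective_algebraMap (algebraMap K L).injective p
  refine ⟨L, inferInstance, .ofFinite L, inferInstance, iterateFrobenius L p (m * 3), ?_,
    fun x ↦ ?_⟩
  · rw [FiniteField.natCard_extension, hσ.card_eq, ← pow_mul, ← pow_mul]; ring
  · rw [iterateFrobenius_def, pow_mul]

variable {L : Type*} [Field L] [Finite L] [Algebra K L] {τ : L →+* L}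
  (hτ : IsConjugation τ (q ^ 3))
include hτ

theorem exists_apply_eq_self_notMem_range :
    ∃ θ : L, τ θ = θ ∧ θ ∉ (algebraMap K L).range := by
  classical
  have := Fintype.ofFinite K
  have := Fintype.ofFinite L
  by_contra! h
  have hsub : ({x | τ x = x} : Finset L) ⊆ ({k | σ k = k} : Finset K).image (algebraMap K L) := by
    intro x hx
    rw [mem_filter_univ] at hx
    obtain ⟨k, rfl⟩ := h x hx
    rw [hσ.apply_algebraMap hτ, (algebraMap K L).injective.eq_iff] at hx
    exact mem_image_of_mem _ (by simpa using hx)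
  have hcard := (card_le_card hsub).trans card_image_le
  rw [hτ.card_apply_eq_self, hσ.card_apply_eq_self] at hcard
  exact hcard.not_gt (lt_self_pow₀ hσ.one_lt (by decide))

theorem nonempty_realCubicBasis : Nonempty (RealCubicBasis K τ) := by
  obtain ⟨θ, hθ, hθK⟩ := exists_apply_eq_self_notMem_range hσ hτ
  have hrank : finrank K L = 3 := by
    have hcard := natCard_eq_pow_finrank (K := K) (V := L)
    rw [hτ.card_eq, hσ.card_eq, ← pow_mul, ← pow_mul] at hcard
    have := Nat.pow_right_injective hσ.one_lt hcard
    lia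
  have hadjoin : Algebra.adjoin K {θ} = ⊤ := by
    have := Subalgebra.isSimpleOrder_of_finrank_prime K L (hrank ▸ Nat.prime_three)
    refine (eq_bot_or_eq_top _).resolve_left fun h ↦ hθK ?_
    exact Algebra.mem_bot.mp (h ▸ Algebra.self_mem_adjoin_singleton K θ)
  obtain ⟨pb, rfl⟩ : ∃ pb : PowerBasis K L, pb.gen = θ :=
    ⟨.ofAdjoinEqTop (Algebra.IsIntegral.isIntegral θ) hadjoin, rfl⟩
  have hdim : pb.dim = 3 := pb.finrank.symm.trans hrank
  exact ⟨⟨pb.gen, hθ, pb.basis.reindex (finCongr hdim), fun i ↦ by simp⟩⟩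

end CubicExtension

section HermitianCone

open Finset Module
open scoped Classical

variable {K : Type*} [Field K] [Finite K] {σ : K →+* K}

namespace RealCubicBasis

variable {L : Type*} [Field L] [Algebra K L] {τ : L →+* L} (b : RealCubicBasis K τ)

section

variable {q : ℕ} (hσ : IsConjugation σ q) (hτ : IsConjugation τ (q ^ 3))

/-- The Hermitian form `(x, y) ↦ lead (τ x * y)` on the `K`-space `L`, the model to which every
nondegenerate Hermitian form in three variables is isometric. -/
noncomputable def leadForm : L →ₛₗ[σ] L →ₗ[K] K :=
  LinearMap.mk₂'ₛₗ σ (.id K) (fun x y ↦ b.lead (τ x * y)) (by simp [add_mul])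
    (fun k x y ↦ by
      rw [Algebra.smul_def, map_mul τ, hσ.apply_algebraMap hτ, mul_assoc, ← Algebra.smul_def,
        map_smul, smul_eq_mul])
    (by simp [mul_add]) (by simp)

theorem leadForm_apply (x y : L) : b.leadForm hσ hτ x y = b.lead (τ x * y) := rfl

theorem separatingLeft_leadForm : (b.leadForm hσ hτ).SeparatingLeft := fun x hx ↦ by
  contrapose! hx
  exact b.exists_lead_mul_ne_zero ((map_ne_zero τ).mpr hx)

variable [Finite L]

theorem isSymm_leadForm : (b.leadForm hσ hτ).IsSymm where
  eq x y := by
    rw [leadForm_apply, leadForm_apply, ← b.lead_apply hσ hτ, map_mul, hτ.apply_apply, mul_comm]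

end

theorem pow_dvd_sum_lead_norm_eq_zero [Fintype L] {p t : ℕ} (hp : p.Prime)
    (hσ : IsConjugation σ (p ^ t)) (hτ : IsConjugation τ ((p ^ t) ^ 3)) (f : L → ℤ)
    (hf : ∀ r : Lˣ, (p : ℤ) ^ t ∣ ∑ x with b.lead (r * x) = 0, f x) :
    (p : ℤ) ^ ((t + 1) / 2) ∣ ∑ x with b.lead (x * τ x) = 0, f x := by
  have := Fact.mk hp
  have ht : t ≠ 0 := by
    rintro rfl
    simpa using hσ.one_lt
  have hcard : ¬ p ∣ Fintype.card Lˣ := by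
    have hq : ((p ^ t) ^ 3 : ℕ) = (0 : ZMod p) := by simp [ht]
    rw [← ZMod.natCast_eq_zero_iff, hτ.cast_card_units hq]
    simp
  have hdvd (z : ℤ) : (p : ℤ) ^ t ∣ z ↔ (z : ZMod (p ^ t)) = 0 := by
    rw [ZMod.intCast_zmod_eq_zero_iff_dvd, Nat.cast_pow]
  have hconv := pow_dvd_of_pow_dvd_convolution_sq hp hcard t
    (fun u : Lˣ ↦ ∑ x with b.lead (u * x * τ (u * x)) = 0, f x) fun w ↦ ?_
  · simpa using hconv 1
  · simp only [hdvd, Int.cast_sum] at hf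
    rw [hdvd]
    simpa using b.sum_mul_sum_eq_zero hσ hτ (by simp) hf w

end RealCubicBasis

theorem pow_dvd_sum_apply_self_eq_zero {p t : ℕ} (hp : p.Prime) (hσ : IsConjugation σ (p ^ t))
    {V : Type*} [AddCommGroup V] [Module K V] [Fintype V] (hV : finrank K V = 3)
    {B : V →ₛₗ[σ] V →ₗ[K] K} (hB : B.IsSymm) (hsep : B.SeparatingLeft) (f : V → ℤ)
    (hf : ∀ φ : Dual K V, φ ≠ 0 → (p : ℤ) ^ t ∣ ∑ v with φ v = 0, f v) :
    (p : ℤ) ^ ((t + 1) / 2) ∣ ∑ v with B v v = 0, f v := by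
  obtain ⟨L, _, _, _, τ, hτ⟩ := hσ.exists_cubic_extension
  obtain ⟨b⟩ := nonempty_realCubicBasis hσ hτ
  have hL : finrank K L = 3 := finrank_eq_card_basis b.basis
  obtain ⟨e, he⟩ := hσ.exists_isometry hB hsep (b.isSymm_leadForm hσ hτ)
    (b.separatingLeft_leadForm hσ hτ) (hV.trans hL.symm)
  have htransfer (P : L → Prop) : ∑ x with P x, f (e.symm x) = ∑ v with P (e v), f v :=
    sum_equiv e.symm.toEquiv (by simp) (by simp)
  have hdvd := b.pow_dvd_sum_lead_norm_eq_zero hp hσ hτ (fun x ↦ f (e.symm x)) fun r ↦ ?_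
  · simpa only [htransfer, ← he, RealCubicBasis.leadForm_apply, mul_comm] using hdvd
  · rw [htransfer]
    refine hf (b.lead ∘ₗ LinearMap.mulLeft K (r : L) ∘ₗ e.toLinearMap) fun h ↦ ?_
    obtain ⟨y, hy⟩ := b.exists_lead_mul_ne_zero r.ne_zero
    exact hy (by simpa using congr($h (e.symm y)))

end HermitianCone

section AffineCone

open LinearAlgebra.Projectivization Projectivization Module

variable {K V : Type*} [Field K] [AddCommGroup V] [Module K V]

/-- The affine cone over a set of points of projective space: the vectors spanning one of the
points, together with the zero vector. -/
def affineCone (X : Set (ℙ K V)) : Set V := {v | ∀ hv : v ≠ 0, .mk K v hv ∈ X}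

theorem affineCone_inter (X Y : Set (ℙ K V)) :
    affineCone (X ∩ Y) = affineCone X ∩ affineCone Y := by
  ext v
  exact forall_and

theorem affineCone_submodule_le (W : Submodule K V) :
    affineCone {P : ℙ K V | P.submodule ≤ W} = W := by
  ext v
  by_cases hv : v = 0
  · simp [affineCone, hv]
  · simp [affineCone, hv, submodule_mk]

theorem card_affineCone [Finite V] (X : Set (ℙ K V)) :
    Nat.card (affineCone X) = Nat.card X * Nat.card Kˣ + 1 := by
  let e := nonZeroEquivProjectivizationProdUnits K V
  have hcone : affineCone X = insert 0 (Subtype.val '' (e ⁻¹' (X ×ˢ Set.univ))) := by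
    ext v
    by_cases hv : v = 0
    · simp [affineCone, hv]
    · have he : (e ⟨v, hv⟩).1 = .mk K v hv := rfl
      simp [affineCone, hv, he]
  rw [Nat.card_coe_set_eq, hcone, Set.ncard_insert_of_notMem (by simp),
    Set.ncard_image_of_injective _ Subtype.val_injective,
    Set.ncard_preimage_of_injective_subset_range e.injective (by simp), Set.ncard_prod,
    Set.ncard_univ, Nat.card_coe_set_eq]

theorem affineCone_setOf_exists_mk {p : V → Prop} (h0 : p 0)
    (hsmul : ∀ (k : K) (v : V), p v → p (k • v)) :
    affineCone {P : ℙ K V | ∃ (v : V) (hv : v ≠ 0), P = .mk K v hv ∧ p v} = {v | p v} := by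
  ext v
  by_cases hv : v = 0
  · simp [affineCone, hv, h0]
  · refine ⟨fun h ↦ ?_, fun h _ ↦ ⟨v, hv, rfl, h⟩⟩
    obtain ⟨w, hw, hvw, hp⟩ := h hv
    obtain ⟨k, rfl⟩ := (mk_eq_mk_iff' K v w hv hw).mp hvw
    exact hsmul k w hp

theorem dvd_card_affineCone_iff [Finite K] [Finite V] {d : ℕ} (hd : d ∣ Nat.card K)
    (X : Set (ℙ K V)) : d ∣ Nat.card (affineCone X) ↔ Nat.card X ≡ 1 [MOD d] := by
  have hK : ((Nat.card Kˣ : ℕ) : ZMod d) = -1 := by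
    rw [Nat.card_units, Nat.cast_sub Nat.card_pos, (ZMod.natCast_eq_zero_iff _ _).mpr hd]
    simp
  rw [card_affineCone, ← ZMod.natCast_eq_zero_iff, ← ZMod.natCast_eq_natCast_iff]
  push_cast
  rw [hK, mul_neg_one, neg_add_eq_zero]

end AffineCone

section MatrixForm

open Matrix

variable {K : Type*} [Field K] {ι : Type*} [Fintype ι] [DecidableEq ι]

/-- The form `(u, v) ↦ ∑ i, ∑ j, v i * A i j * σ (u j)`. Sesquilinear maps are semilinear in the
left argument, hence the transpose. -/
noncomputable def sesquilinearForm (σ : K →+* K) (A : Matrix ι ι K) :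
    (ι → K) →ₛₗ[σ] (ι → K) →ₗ[K] K :=
  toLinearMapₛₗ₂' K σ (.id K) Aᵀ

variable {σ : K →+* K} {A : Matrix ι ι K}

theorem sesquilinearForm_apply (u v : ι → K) :
    sesquilinearForm σ A u v = ∑ i, ∑ j, v i * A i j * σ (u j) := by
  simp only [sesquilinearForm, toLinearMapₛₗ₂'_apply, RingHom.id_apply, smul_eq_mul,
    transpose_apply]
  rw [Finset.sum_comm]
  exact Finset.sum_congr rfl fun i _ ↦ Finset.sum_congr rfl fun j _ ↦ mul_comm _ _

theorem isSymm_sesquilinearForm (hσ : Function.Involutive σ) (hA : Aᵀ = A.map σ) :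
    (sesquilinearForm σ A).IsSymm where
  eq u v := by
    have hA' (i j : ι) : σ (A i j) = A j i := congr($hA i j).symm
    simp only [sesquilinearForm_apply, map_sum, map_mul, hA', hσ _]
    rw [Finset.sum_comm]
    exact Finset.sum_congr rfl fun i _ ↦ Finset.sum_congr rfl fun j _ ↦ by ring

theorem separatingLeft_sesquilinearForm (hA : IsUnit A.det) :
    (sesquilinearForm σ A).SeparatingLeft := fun u hu ↦ by
  have hAu : A *ᵥ (σ ∘ u) = 0 := by
    ext i
    simpa [sesquilinearForm_apply, mulVec, dotProduct, Pi.single_apply] using hu (Pi.single i 1)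
  ext i
  simpa using congrFun (eq_zero_of_mulVec_eq_zero hA.ne_zero hAu) i

end MatrixForm

section Unital

open Finset Module LinearAlgebra.Projectivization

theorem natCard_inter_modEq_one {p t : ℕ} (hp : p.Prime) {K V : Type*} [Field K] [Finite K]
    {σ : K →+* K} (hσ : IsConjugation σ (p ^ t)) [AddCommGroup V] [Module K V]
    (hV : finrank K V = 3) {B : V →ₛₗ[σ] V →ₗ[K] K} (hB : B.IsSymm) (hsep : B.SeparatingLeft)
    {H U : Set (ℙ K V)} (hH : affineCone H = {v | B v v = 0})
    (hU : ∀ W : Submodule K V, finrank K W = 2 →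
      Nat.card {P : ℙ K V | P ∈ U ∧ P.submodule ≤ W} ≡ 1 [MOD p ^ t]) :
    Nat.card ↥(H ∩ U) ≡ 1 [MOD p ^ ((t + 1) / 2)] := by
  classical
  have : FiniteDimensional K V := .of_finrank_eq_succ hV
  have : Finite V := Module.finite_of_finite K
  have := Fintype.ofFinite V
  have hcard {d : ℕ} (hd : d ∣ p ^ t) : d ∣ Nat.card K :=
    hσ.card_eq ▸ hd.trans (dvd_pow_self _ two_ne_zero)
  have hsum (P : V → Prop) : ∑ v with P v, ((if v ∈ affineCone U then 1 else 0 : ℕ) : ℤ) =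
      Nat.card ↥({v | P v} ∩ affineCone U) := by
    rw [← Nat.cast_sum, sum_boole, filter_filter, Nat.card_eq_fintype_card, Fintype.card_subtype]
    rfl
  have hdvd := pow_dvd_sum_apply_self_eq_zero hp hσ hV hB hsep
    (fun v ↦ ((if v ∈ affineCone U then 1 else 0 : ℕ) : ℤ)) fun φ hφ ↦ ?_
  · rw [hsum, ← hH, ← affineCone_inter] at hdvd
    refine (dvd_card_affineCone_iff (hcard (pow_dvd_pow p (by lia))) _).mp ?_
    exact_mod_cast hdvd
  · have hker : finrank K φ.ker = 2 := by
      have := Dual.finrank_ker_add_one_of_ne_zero hφ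
      lia
    have hline := (dvd_card_affineCone_iff (hcard dvd_rfl) _).mpr (hU _ hker)
    rw [Set.ofPred_and, Set.ofPred_mem_eq, affineCone_inter, affineCone_submodule_le,
      Set.inter_comm] at hline
    rw [hsum]
    exact_mod_cast hline

end Unital

theorem hermitian_meets_unital_general {p t q : ℕ} (hp : p.Prime) (hq : q = p ^ t)
    {K : Type*} [Field K] [Fintype K] (hK : Fintype.card K = q ^ 2)
    {A : Matrix (Fin 3) (Fin 3) K} (hA : A.transpose = A.map (· ^ q)) (hAinv : IsUnit A.det)
    {H : Set (Projectivization K (Fin 3 → K))}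
    (hH : H = {P | ∃ (v : Fin 3 → K) (hv : v ≠ 0),
        P = Projectivization.mk K v hv ∧ ∑ i, ∑ j, v i * A i j * v j ^ q = 0})
    {U : Set (Projectivization K (Fin 3 → K))}
    (hline : ∀ L : Submodule K (Fin 3 → K), Module.finrank K L = 2 →
      Nat.card {P : Projectivization K (Fin 3 → K) | P ∈ U ∧ P.submodule ≤ L} ≡ 1 [MOD q]) :
    Nat.card ↥(H ∩ U) ≡ 1 [MOD p ^ ((t + 1) / 2)] := by
  subst hq
  have := Fact.mk hp
  have : CharP K p := charP_of_card_eq_prime_pow (hK.trans (pow_mul p t 2).symm)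
  let σ := iterateFrobenius K p t
  have hσ : IsConjugation σ (p ^ t) := ⟨Nat.card_eq_fintype_card.trans hK, fun _ ↦ rfl⟩
  let B := sesquilinearForm σ A
  have hB (v : Fin 3 → K) : B v v = ∑ i, ∑ j, v i * A i j * v j ^ p ^ t :=
    sesquilinearForm_apply v v
  have hcone : affineCone H = {v | B v v = 0} := by
    simp only [hH, ← hB]
    exact affineCone_setOf_exists_mk (by simp) fun k v hv ↦ by simp [hv]
  exact natCard_inter_modEq_one hp hσ (by simp) (isSymm_sesquilinearForm hσ.apply_apply hA)
    (separatingLeft_sesquilinearForm hAinv) hcone hline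

open Finset in
/-- If `H` is a nondegenerate Hermitian unital in `PG(2, q²)` with `q = p^t` and `U`
is any unital embedded in `PG(2, q²)`, then `|H ∩ U| ≡ 1 (mod p^⌈t/2⌉)`. -/
theorem hermitian_meets_unital (p t q : ℕ) (hp : p.Prime) (ht : 0 < t) (hq : q = p ^ t)
    (K : Type*) [Field K] [Fintype K] (hK : Fintype.card K = q ^ 2)
    (A : Matrix (Fin 3) (Fin 3) K)
    (hA : A.transpose = A.map (· ^ q)) (hAinv : IsUnit A.det)
    (H : Set (Projectivization K (Fin 3 → K)))
    (hH : H = {P | ∃ (v : Fin 3 → K) (hv : v ≠ 0),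
        P = Projectivization.mk K v hv ∧ ∑ i, ∑ j, v i * A i j * v j ^ q = 0})
    (U : Set (Projectivization K (Fin 3 → K)))
    (hUcard : Nat.card U = q ^ 3 + 1)
    (hline : ∀ L : Submodule K (Fin 3 → K), Module.finrank K L = 2 →
      Nat.card {P : Projectivization K (Fin 3 → K) | P ∈ U ∧ P.submodule ≤ L} = 1 ∨
      Nat.card {P : Projectivization K (Fin 3 → K) | P ∈ U ∧ P.submodule ≤ L} = q + 1) :
    Nat.card ↥(H ∩ U) ≡ 1 [MOD p ^ ((t + 1) / 2)] :=
  hermitian_meets_unital_general hp hq hK hA hAinv hH fun L hL ↦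
    (hline L hL).elim (fun h ↦ h ▸ .rfl) fun h ↦ h ▸ by simp [Nat.ModEq]
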